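/- If U is a universe, then * = {0|0} is U-invertible if and only if U contains no Left end that is a starkiller. -/

import Mathlib

/-- Augmented (misère) game forms: finitely many Left and Right options,
    possibly adorned with a Left and/or Right tombstone marker. -/
inductive Aug : Type
  | mk (m n : ℕ) (L : Fin m → Aug) (R : Fin n → Aug) (tl tr : Bool) : Aug

namespace Aug

def numL : Aug → ℕ
  | mk m _ _ _ _ _ => m

def numR : Aug → ℕ
  | mk _ n _ _ _ _ => n

def moveL : (G : Aug) → Fin G.numL → Aug
  | mk _ _ L _ _ _ => L

def moveR : (G : Aug) → Fin G.numR → Aug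
  | mk _ _ _ R _ _ => R

def tombL : Aug → Bool
  | mk _ _ _ _ t _ => t

def tombR : Aug → Bool
  | mk _ _ _ _ _ t => t

instance : Zero Aug := ⟨mk 0 0 Fin.elim0 Fin.elim0 false false⟩

/-- Disjunctive sum of augmented forms (tombstones propagate to the sum). -/
protected noncomputable def add : Aug → Aug → Aug := by
  intro x
  induction x with
  | mk m n L R tl tr IHL IHR =>
    intro y
    induction y with
    | mk m' n' L' R' tl' tr' IHL' IHR' =>
      exact mk (m + m') (n + n')
        (Fin.addCases (motive := fun _ => Aug)
          (fun i => IHL i (mk m' n' L' R' tl' tr')) (fun j => IHL' j))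
        (Fin.addCases (motive := fun _ => Aug)
          (fun i => IHR i (mk m' n' L' R' tl' tr')) (fun j => IHR' j))
        (tl || tl') (tr || tr')

noncomputable instance : Add Aug := ⟨Aug.add⟩

/-- Conjugate: swap Left and Right throughout. -/
noncomputable def conj : Aug → Aug := by
  intro G
  induction G with
  | mk m n L R tl tr IHL IHR => exact mk n m IHR IHL tr tl

/-- A genuine game form: no tombstones anywhere. -/
def IsGame : Aug → Prop := by
  intro G
  induction G with
  | mk m n L R tl tr IHL IHR =>
    exact tl = false ∧ tr = false ∧ (∀ i, IHL i) ∧ (∀ j, IHR j)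

/-- Formal birthday (tombstones contribute nothing). -/
noncomputable def birthday : Aug → ℕ := by
  intro G
  induction G with
  | mk m n L R _ _ IHL IHR =>
    exact max (Finset.univ.sup fun i => IHL i + 1) (Finset.univ.sup fun j => IHR j + 1)

/-- `winsF G true` : Left, moving first, wins `G` in misère play
    (a Left end-like position is a first-player win for Left).
    `winsF G false` : Right, moving first, wins `G`. -/
def winsF : Aug → Bool → Prop := by
  intro G
  induction G with
  | mk m n L R tl tr IHL IHR =>
    intro b
    exact match b with
      | true => tl = true ∨ m = 0 ∨ ∃ i, ¬ IHL i false
      | false => tr = true ∨ n = 0 ∨ ∃ j, ¬ IHR j true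

/-- Left outcome is `L`. -/
def oL (G : Aug) : Prop := winsF G true

/-- Right outcome is `L` (Left, moving second, wins). -/
def oR (G : Aug) : Prop := ¬ winsF G false

/-- `outcome G ≥ outcome H` in the misère partial order of outcomes
    (Left prefers larger). -/
def outGe (G H : Aug) : Prop := (oL H → oL G) ∧ (oR H → oR G)

/-- `outcome G = outcome H`. -/
def outEq (G H : Aug) : Prop := (oL G ↔ oL H) ∧ (oR G ↔ oR H)

/-- `G ≥_A H`. -/
def geA (A : Set Aug) (G H : Aug) : Prop := ∀ X ∈ A, outGe (G + X) (H + X)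

/-- `G ≡_A H`. -/
def equivA (A : Set Aug) (G H : Aug) : Prop := ∀ X ∈ A, outEq (G + X) (H + X)

def LeftEnd (G : Aug) : Prop := G.numL = 0
def RightEnd (G : Aug) : Prop := G.numR = 0
def LeftEndLike (G : Aug) : Prop := G.tombL = true ∨ G.numL = 0
def RightEndLike (G : Aug) : Prop := G.tombR = true ∨ G.numR = 0

/-- `G` is Left `A`-strong. -/
def LeftStrong (A : Set Aug) (G : Aug) : Prop :=
  ∀ X ∈ A, LeftEnd X → winsF (G + X) true

/-- `G` is Right `A`-strong. -/
def RightStrong (A : Set Aug) (G : Aug) : Prop :=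
  ∀ X ∈ A, RightEnd X → winsF (G + X) false

/-- Hereditarily closed set of games. -/
def Hereditary (A : Set Aug) : Prop :=
  ∀ G ∈ A, (∀ i, G.moveL i ∈ A) ∧ (∀ j, G.moveR j ∈ A)

/-- An (absolute) universe of misère games. -/
structure IsUniverse (U : Set Aug) : Prop where
  games : ∀ G ∈ U, IsGame G
  zero_mem : (0 : Aug) ∈ U
  add_mem : ∀ G ∈ U, ∀ H ∈ U, G + H ∈ U
  conj_mem : ∀ G ∈ U, conj G ∈ U
  moveL_mem : ∀ G ∈ U, ∀ i, G.moveL i ∈ U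
  moveR_mem : ∀ G ∈ U, ∀ j, G.moveR j ∈ U
  dicotic : ∀ (m n : ℕ) (L : Fin m → Aug) (R : Fin n → Aug), 0 < m → 0 < n →
    (∀ i, L i ∈ U) → (∀ j, R j ∈ U) → mk m n L R false false ∈ U

/-- `Û`: the augmented forms admitting a `U`-expansion, i.e. equivalent
    modulo `U` to some member of `U`. -/
def hatU (U : Set Aug) : Set Aug := {G | ∃ G' ∈ U, equivA U G G'}

/-- `G` is `A`-invertible (with inverse in `A`). -/
def Invertible (A : Set Aug) (G : Aug) : Prop := ∃ H ∈ A, equivA A (G + H) 0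

/-- `G` is `U`-invertible with inverse in `Û`. -/
def InvertibleHat (U : Set Aug) (G : Aug) : Prop := ∃ H ∈ hatU U, equivA U (G + H) 0

/-- `G` is conjugate `A`-invertible. -/
def ConjInvertible (A : Set Aug) (G : Aug) : Prop :=
  conj G ∈ A ∧ equivA A (G + conj G) 0

/-- `A` is a monoid of games: a set of games containing `0`, closed under
    disjunctive sum, on which `≡_A` is a congruence. -/
structure IsMonoidOfGames (A : Set Aug) : Prop where
  games : ∀ G ∈ A, IsGame G
  zero_mem : (0 : Aug) ∈ A
  add_mem : ∀ G ∈ A, ∀ H ∈ A, G + H ∈ A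
  congr : ∀ G ∈ A, ∀ H ∈ A, ∀ J ∈ A, equivA A G H → equivA A (G + J) (H + J)

/-- `U`-simplest form: hereditarily, no dominated options, no reversible
    options, and no unnecessary tombstones. -/
def Simplest (U : Set Aug) : Aug → Prop := by
  intro G
  induction G with
  | mk m n L R tl tr IHL IHR =>
    exact
      (∀ i i' : Fin m, geA U (L i) (L i') → i = i') ∧
      (∀ j j' : Fin n, geA U (R j) (R j') → j = j') ∧
      (∀ i : Fin m, ∀ jj : Fin (L i).numR, ¬ geA U (mk m n L R tl tr) ((L i).moveR jj)) ∧
      (∀ j : Fin n, ∀ ii : Fin (R j).numL, ¬ geA U ((R j).moveL ii) (mk m n L R tl tr)) ∧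
      (tl = true → ¬ equivA U (mk m n L R tl tr) (mk m n L R false tr)) ∧
      (tr = true → ¬ equivA U (mk m n L R tl tr) (mk m n L R tl false)) ∧
      (∀ i, IHL i) ∧ (∀ j, IHR j)

lemma birthday_mk (m n : ℕ) (L : Fin m → Aug) (R : Fin n → Aug) (tl tr : Bool) :
    birthday (mk m n L R tl tr) =
      max (Finset.univ.sup fun i => birthday (L i) + 1)
          (Finset.univ.sup fun j => birthday (R j) + 1) := rfl

lemma birthday_moveL_lt : ∀ (G : Aug) (i : Fin G.numL), birthday (G.moveL i) < birthday G := by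
  intro G
  cases G with
  | mk m n L R tl tr =>
    intro i
    show birthday (L i) < birthday (mk m n L R tl tr)
    rw [birthday_mk]
    have h1 : birthday (L i) + 1 ≤ Finset.univ.sup (fun i => birthday (L i) + 1) :=
      Finset.le_sup (f := fun i => birthday (L i) + 1) (Finset.mem_univ i)
    exact lt_of_lt_of_le (Nat.lt_succ_self _) (h1.trans (le_max_left _ _))

lemma birthday_moveR_lt : ∀ (G : Aug) (j : Fin G.numR), birthday (G.moveR j) < birthday G := by
  intro G
  cases G with
  | mk m n L R tl tr =>
    intro j
    show birthday (R j) < birthday (mk m n L R tl tr)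
    rw [birthday_mk]
    have h1 : birthday (R j) + 1 ≤ Finset.univ.sup (fun j => birthday (R j) + 1) :=
      Finset.le_sup (f := fun j => birthday (R j) + 1) (Finset.mem_univ j)
    exact lt_of_lt_of_le (Nat.lt_succ_self _) (h1.trans (le_max_right _ _))

/-- A disintegrator. -/
def Disintegrator (G : Aug) : Prop :=
  ∃ j : Fin G.numR, (G.moveR j).numL ≠ 0 ∧
    ∀ i : Fin (G.moveR j).numL,
      ¬ winsF ((G.moveR j).moveL i) true ∨ Disintegrator ((G.moveR j).moveL i)
termination_by birthday G
decreasing_by exact lt_trans (birthday_moveL_lt _ _) (birthday_moveR_lt _ _)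

/-- A starkiller. -/
def Starkiller (G : Aug) : Prop :=
  ∃ j : Fin G.numR, winsF (G.moveR j) false ∧
    ∀ i : Fin (G.moveR j).numL,
      ¬ winsF ((G.moveR j).moveL i) true ∨ Starkiller ((G.moveR j).moveL i)
termination_by birthday G
decreasing_by exact lt_trans (birthday_moveL_lt _ _) (birthday_moveR_lt _ _)

def one : Aug := mk 1 0 (fun _ => 0) Fin.elim0 false false
def two : Aug := mk 1 0 (fun _ => one) Fin.elim0 false false
def star : Aug := mk 1 1 (fun _ => 0) (fun _ => 0) false false
/-- `conjugate(1) = {·|0}`. -/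
def oneConj : Aug := mk 0 1 Fin.elim0 (fun _ => 0) false false
/-- `{·|2}`. -/
def endTwo : Aug := mk 0 1 Fin.elim0 (fun _ => two) false false

/-- `n` copies of `G` summed. -/
noncomputable def nCopies : ℕ → Aug → Aug
  | 0, _ => 0
  | n + 1, G => nCopies n G + G

/-- Dicot: every subposition has both or neither kind of option. -/
def Dicot : Aug → Prop := by
  intro G
  induction G with
  | mk m n L R _ _ IHL IHR => exact (m = 0 ↔ n = 0) ∧ (∀ i, IHL i) ∧ (∀ j, IHR j)

/-- Hereditarily a Left end. -/
def LeftEndHered : Aug → Prop := by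
  intro G
  induction G with
  | mk m n L R _ _ IHL IHR => exact m = 0 ∧ (∀ j, IHR j)

/-- Hereditarily a Right end. -/
def RightEndHered : Aug → Prop := by
  intro G
  induction G with
  | mk m n L R _ _ IHL IHR => exact n = 0 ∧ (∀ i, IHL i)

/-- Dead-ending: once a player has no move in a subposition, that player
    never again has a move. -/
def DeadEnding : Aug → Prop := by
  intro G
  induction G with
  | mk m n L R tl tr IHL IHR =>
    exact (m = 0 → LeftEndHered (mk m n L R tl tr)) ∧
      (n = 0 → RightEndHered (mk m n L R tl tr)) ∧
      (∀ i, IHL i) ∧ (∀ j, IHR j)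

/-- Left weak set of games. -/
def LeftWeak (A : Set Aug) : Prop := ∀ G : Aug, LeftStrong A G ↔ LeftEndLike G

/-- Right weak set of games. -/
def RightWeak (A : Set Aug) : Prop := ∀ G : Aug, RightStrong A G ↔ RightEndLike G

end Aug

namespace Aug

def Lopt (G x : Aug) : Prop := ∃ i, G.moveL i = x
def Ropt (G x : Aug) : Prop := ∃ i, G.moveR i = x

lemma add_mk (m n L R tl tr m' n' L' R' tl' tr') :
    (mk m n L R tl tr + mk m' n' L' R' tl' tr' : Aug) =
      mk (m + m') (n + n')
        (Fin.addCases (motive := fun _ => Aug)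
          (fun i => L i + mk m' n' L' R' tl' tr') (fun j => mk m n L R tl tr + L' j))
        (Fin.addCases (motive := fun _ => Aug)
          (fun i => R i + mk m' n' L' R' tl' tr') (fun j => mk m n L R tl tr + R' j))
        (tl || tl') (tr || tr') := rfl

lemma tombL_add (G H : Aug) : (G + H).tombL = (G.tombL || H.tombL) := by
  cases G; cases H; rfl

lemma tombR_add (G H : Aug) : (G + H).tombR = (G.tombR || H.tombR) := by
  cases G; cases H; rfl

lemma Lopt_add (G H x : Aug) :
    Lopt (G + H) x ↔ (∃ g, Lopt G g ∧ x = g + H) ∨ (∃ h, Lopt H h ∧ x = G + h) := by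
  cases G with
  | mk m n L R tl tr =>
  cases H with
  | mk m' n' L' R' tl' tr' =>
  rw [add_mk]
  simp only [Lopt, moveL, numL]
  constructor
  · rintro ⟨i, rfl⟩
    refine Fin.addCases (fun i => ?_) (fun i => ?_) i
    · left; exact ⟨L i, ⟨i, rfl⟩, by simp⟩
    · right; exact ⟨L' i, ⟨i, rfl⟩, by simp⟩
  · rintro (⟨g, ⟨i, rfl⟩, rfl⟩ | ⟨g, ⟨i, rfl⟩, rfl⟩)
    · exact ⟨Fin.castAdd _ i, by simp⟩
    · exact ⟨Fin.natAdd _ i, by simp⟩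

lemma Ropt_add (G H x : Aug) :
    Ropt (G + H) x ↔ (∃ g, Ropt G g ∧ x = g + H) ∨ (∃ h, Ropt H h ∧ x = G + h) := by
  cases G with
  | mk m n L R tl tr =>
  cases H with
  | mk m' n' L' R' tl' tr' =>
  rw [add_mk]
  simp only [Ropt, moveR, numR]
  constructor
  · rintro ⟨i, rfl⟩
    refine Fin.addCases (fun i => ?_) (fun i => ?_) i
    · left; exact ⟨R i, ⟨i, rfl⟩, by simp⟩
    · right; exact ⟨R' i, ⟨i, rfl⟩, by simp⟩
  · rintro (⟨g, ⟨i, rfl⟩, rfl⟩ | ⟨g, ⟨i, rfl⟩, rfl⟩)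
    · exact ⟨Fin.castAdd _ i, by simp⟩
    · exact ⟨Fin.natAdd _ i, by simp⟩

lemma game_ind {P : Aug → Prop}
    (h : ∀ G, (∀ x, Lopt G x → P x) → (∀ x, Ropt G x → P x) → P G) (G : Aug) : P G := by
  induction G with
  | mk m n L R tl tr ihL ihR =>
    apply h
    · rintro x ⟨i, rfl⟩; exact ihL i
    · rintro x ⟨i, rfl⟩; exact ihR i

lemma winsF_true (G : Aug) :
    winsF G true ↔ G.tombL = true ∨ (∀ x, ¬ Lopt G x) ∨ ∃ x, Lopt G x ∧ ¬ winsF x false := by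
  cases G with
  | mk m n L R tl tr =>
    change (tl = true ∨ m = 0 ∨ ∃ i, ¬ winsF (L i) false) ↔
      (tl = true ∨ (∀ x, ¬ ∃ i : Fin m, L i = x) ∨ ∃ x, (∃ i : Fin m, L i = x) ∧ ¬ winsF x false)
    have h1 : (∀ x, ¬ ∃ i : Fin m, L i = x) ↔ m = 0 := by
      constructor
      · intro h
        by_contra hm
        exact h _ ⟨⟨0, Nat.pos_of_ne_zero hm⟩, rfl⟩
      · rintro rfl x ⟨i, _⟩; exact i.elim0
    rw [h1]; simp

lemma winsF_false (G : Aug) :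
    winsF G false ↔ G.tombR = true ∨ (∀ x, ¬ Ropt G x) ∨ ∃ x, Ropt G x ∧ ¬ winsF x true := by
  cases G with
  | mk m n L R tl tr =>
    change (tr = true ∨ n = 0 ∨ ∃ i, ¬ winsF (R i) true) ↔
      (tr = true ∨ (∀ x, ¬ ∃ i : Fin n, R i = x) ∨ ∃ x, (∃ i : Fin n, R i = x) ∧ ¬ winsF x true)
    have h1 : (∀ x, ¬ ∃ i : Fin n, R i = x) ↔ n = 0 := by
      constructor
      · intro h
        by_contra hm
        exact h _ ⟨⟨0, Nat.pos_of_ne_zero hm⟩, rfl⟩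
      · rintro rfl x ⟨i, _⟩; exact i.elim0
    rw [h1]; simp

lemma leftEnd_iff (G : Aug) : LeftEnd G ↔ ∀ x, ¬ Lopt G x := by
  cases G with
  | mk m n L R tl tr =>
    change m = 0 ↔ ∀ x, ¬ ∃ i : Fin m, L i = x
    constructor
    · rintro rfl x ⟨i, _⟩; exact i.elim0
    · intro h
      by_contra hm
      exact h _ ⟨⟨0, Nat.pos_of_ne_zero hm⟩, rfl⟩

/-! Structural equivalence -/

def Sim : Aug → Aug → Prop
  | mk m n L R tl tr, H =>
    (∀ i : Fin m, ∃ y, Lopt H y ∧ Sim (L i) y) ∧ (∀ y, Lopt H y → ∃ i : Fin m, Sim (L i) y) ∧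
    (∀ i : Fin n, ∃ y, Ropt H y ∧ Sim (R i) y) ∧ (∀ y, Ropt H y → ∃ i : Fin n, Sim (R i) y) ∧
    tl = H.tombL ∧ tr = H.tombR

lemma sim_iff (G H : Aug) : Sim G H ↔
    (∀ x, Lopt G x → ∃ y, Lopt H y ∧ Sim x y) ∧ (∀ y, Lopt H y → ∃ x, Lopt G x ∧ Sim x y) ∧
    (∀ x, Ropt G x → ∃ y, Ropt H y ∧ Sim x y) ∧ (∀ y, Ropt H y → ∃ x, Ropt G x ∧ Sim x y) ∧
    G.tombL = H.tombL ∧ G.tombR = H.tombR := by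
  cases G with
  | mk m n L R tl tr =>
    rw [Sim]
    have e1 : ∀ x, Lopt (mk m n L R tl tr) x ↔ ∃ i : Fin m, L i = x := fun x => Iff.rfl
    have e2 : ∀ x, Ropt (mk m n L R tl tr) x ↔ ∃ i : Fin n, R i = x := fun x => Iff.rfl
    simp only [e1, e2, tombL, tombR]
    simp

lemma sim_refl (G : Aug) : Sim G G := by
  induction G using game_ind with
  | h G hL hR =>
    rw [sim_iff]
    exact ⟨fun x hx => ⟨x, hx, hL x hx⟩, fun x hx => ⟨x, hx, hL x hx⟩,
      fun x hx => ⟨x, hx, hR x hx⟩, fun x hx => ⟨x, hx, hR x hx⟩, rfl, rfl⟩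

lemma sim_symm (G : Aug) : ∀ H, Sim G H → Sim H G := by
  induction G using game_ind with
  | h G hL hR =>
    intro H h
    rw [sim_iff] at h ⊢
    obtain ⟨a, b, c, d, e, f⟩ := h
    refine ⟨fun x hx => ?_, fun x hx => ?_, fun x hx => ?_, fun x hx => ?_, e.symm, f.symm⟩
    · obtain ⟨y, hy, h⟩ := b x hx; exact ⟨y, hy, hL y hy _ h⟩
    · obtain ⟨y, hy, h⟩ := a x hx; exact ⟨y, hy, hL x hx _ h⟩
    · obtain ⟨y, hy, h⟩ := d x hx; exact ⟨y, hy, hR y hy _ h⟩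
    · obtain ⟨y, hy, h⟩ := c x hx; exact ⟨y, hy, hR x hx _ h⟩

lemma sim_trans (G : Aug) : ∀ H K, Sim G H → Sim H K → Sim G K := by
  induction G using game_ind with
  | h G hL hR =>
    intro H K h h'
    rw [sim_iff] at h h' ⊢
    obtain ⟨a, b, c, d, e, f⟩ := h
    obtain ⟨a', b', c', d', e', f'⟩ := h'
    refine ⟨fun x hx => ?_, fun x hx => ?_, fun x hx => ?_, fun x hx => ?_,
      e.trans e', f.trans f'⟩
    · obtain ⟨y, hy, h⟩ := a x hx
      obtain ⟨z, hz, h2⟩ := a' y hy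
      exact ⟨z, hz, hL x hx _ _ h h2⟩
    · obtain ⟨y, hy, h⟩ := b' x hx
      obtain ⟨z, hz, h2⟩ := b y hy
      exact ⟨z, hz, hL z hz _ _ h2 h⟩
    · obtain ⟨y, hy, h⟩ := c x hx
      obtain ⟨z, hz, h2⟩ := c' y hy
      exact ⟨z, hz, hR x hx _ _ h h2⟩
    · obtain ⟨y, hy, h⟩ := d' x hx
      obtain ⟨z, hz, h2⟩ := d y hy
      exact ⟨z, hz, hR z hz _ _ h2 h⟩

lemma sim_winsF (G : Aug) : ∀ H, Sim G H → ∀ b, (winsF G b ↔ winsF H b) := by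
  induction G using game_ind with
  | h G hL hR =>
    intro H h
    rw [sim_iff] at h
    obtain ⟨a, b, c, d, e, f⟩ := h
    rintro (_ | _)
    · rw [winsF_false, winsF_false, f]
      refine or_congr Iff.rfl (or_congr ?_ ?_)
      · constructor
        · intro h y hy
          obtain ⟨x, hx, _⟩ := d y hy
          exact h x hx
        · intro h y hy
          obtain ⟨x, hx, _⟩ := c y hy
          exact h x hx
      · constructor
        · rintro ⟨x, hx, h⟩
          obtain ⟨y, hy, hs⟩ := c x hx
          exact ⟨y, hy, by rwa [← hR x hx y hs]⟩
        · rintro ⟨y, hy, h⟩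
          obtain ⟨x, hx, hs⟩ := d y hy
          exact ⟨x, hx, by rwa [hR x hx y hs]⟩
    · rw [winsF_true, winsF_true, e]
      refine or_congr Iff.rfl (or_congr ?_ ?_)
      · constructor
        · intro h y hy
          obtain ⟨x, hx, _⟩ := b y hy
          exact h x hx
        · intro h y hy
          obtain ⟨x, hx, _⟩ := a y hy
          exact h x hx
      · constructor
        · rintro ⟨x, hx, h⟩
          obtain ⟨y, hy, hs⟩ := a x hx
          exact ⟨y, hy, by rwa [← hL x hx y hs]⟩
        · rintro ⟨y, hy, h⟩
          obtain ⟨x, hx, hs⟩ := b y hy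
          exact ⟨x, hx, by rwa [hL x hx y hs]⟩

lemma not_Lopt_zero (x : Aug) : ¬ Lopt 0 x := by rintro ⟨i, _⟩; exact i.elim0
lemma not_Ropt_zero (x : Aug) : ¬ Ropt 0 x := by rintro ⟨i, _⟩; exact i.elim0

lemma sim_zero_add (G : Aug) : Sim (0 + G) G := by
  induction G using game_ind with
  | h G hL hR =>
    rw [sim_iff]
    simp only [Lopt_add, Ropt_add, not_Lopt_zero, not_Ropt_zero, tombL_add, tombR_add]
    refine ⟨?_, ?_, ?_, ?_, Bool.false_or _, Bool.false_or _⟩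
    · rintro x (⟨_, h, _⟩ | ⟨h, hh, rfl⟩)
      · exact h.elim
      · exact ⟨h, hh, hL h hh⟩
    · intro y hy; exact ⟨0 + y, Or.inr ⟨y, hy, rfl⟩, hL y hy⟩
    · rintro x (⟨_, h, _⟩ | ⟨h, hh, rfl⟩)
      · exact h.elim
      · exact ⟨h, hh, hR h hh⟩
    · intro y hy; exact ⟨0 + y, Or.inr ⟨y, hy, rfl⟩, hR y hy⟩

lemma sim_comm (G : Aug) : ∀ H, Sim (G + H) (H + G) := by
  induction G using game_ind with
  | h G hL hR =>
    intro H
    induction H using game_ind with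
    | h H hL' hR' =>
      rw [sim_iff]
      simp only [Lopt_add, Ropt_add, tombL_add, tombR_add]
      refine ⟨?_, ?_, ?_, ?_, Bool.or_comm _ _, Bool.or_comm _ _⟩
      · rintro x (⟨g, hg, rfl⟩ | ⟨g, hg, rfl⟩)
        · exact ⟨_, Or.inr ⟨g, hg, rfl⟩, hL g hg H⟩
        · exact ⟨_, Or.inl ⟨g, hg, rfl⟩, hL' g hg⟩
      · rintro x (⟨g, hg, rfl⟩ | ⟨g, hg, rfl⟩)
        · exact ⟨_, Or.inr ⟨g, hg, rfl⟩, hL' g hg⟩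
        · exact ⟨_, Or.inl ⟨g, hg, rfl⟩, hL g hg H⟩
      · rintro x (⟨g, hg, rfl⟩ | ⟨g, hg, rfl⟩)
        · exact ⟨_, Or.inr ⟨g, hg, rfl⟩, hR g hg H⟩
        · exact ⟨_, Or.inl ⟨g, hg, rfl⟩, hR' g hg⟩
      · rintro x (⟨g, hg, rfl⟩ | ⟨g, hg, rfl⟩)
        · exact ⟨_, Or.inr ⟨g, hg, rfl⟩, hR' g hg⟩
        · exact ⟨_, Or.inl ⟨g, hg, rfl⟩, hR g hg H⟩

lemma sim_add_right (G : Aug) : ∀ G' H, Sim G G' → Sim (G + H) (G' + H) := by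
  induction G using game_ind with
  | h G hL hR =>
    intro G' H hs
    induction H using game_ind with
    | h H hL' hR' =>
      have hs' := (sim_iff _ _).1 hs
      obtain ⟨a, b, c, d, e, f⟩ := hs'
      rw [sim_iff]
      simp only [Lopt_add, Ropt_add, tombL_add, tombR_add, e, f]
      refine ⟨?_, ?_, ?_, ?_, trivial, trivial⟩
      · rintro x (⟨g, hg, rfl⟩ | ⟨g, hg, rfl⟩)
        · obtain ⟨y, hy, h⟩ := a g hg
          exact ⟨_, Or.inl ⟨y, hy, rfl⟩, hL g hg _ H h⟩
        · exact ⟨_, Or.inr ⟨g, hg, rfl⟩, hL' g hg⟩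
      · rintro x (⟨g, hg, rfl⟩ | ⟨g, hg, rfl⟩)
        · obtain ⟨y, hy, h⟩ := b g hg
          exact ⟨_, Or.inl ⟨y, hy, rfl⟩, hL y hy _ H h⟩
        · exact ⟨_, Or.inr ⟨g, hg, rfl⟩, hL' g hg⟩
      · rintro x (⟨g, hg, rfl⟩ | ⟨g, hg, rfl⟩)
        · obtain ⟨y, hy, h⟩ := c g hg
          exact ⟨_, Or.inl ⟨y, hy, rfl⟩, hR g hg _ H h⟩
        · exact ⟨_, Or.inr ⟨g, hg, rfl⟩, hR' g hg⟩
      · rintro x (⟨g, hg, rfl⟩ | ⟨g, hg, rfl⟩)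
        · obtain ⟨y, hy, h⟩ := d g hg
          exact ⟨_, Or.inl ⟨y, hy, rfl⟩, hR y hy _ H h⟩
        · exact ⟨_, Or.inr ⟨g, hg, rfl⟩, hR' g hg⟩

lemma sim_assoc (G : Aug) : ∀ H K, Sim (G + H + K) (G + (H + K)) := by
  induction G using game_ind with
  | h G hL hR =>
    intro H
    induction H using game_ind with
    | h H hL' hR' =>
      intro K
      induction K using game_ind with
      | h K hL'' hR'' =>
        rw [sim_iff]
        refine ⟨?_, ?_, ?_, ?_, by simp only [tombL_add, Bool.or_assoc],
          by simp only [tombR_add, Bool.or_assoc]⟩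
        · intro x hx
          rcases (Lopt_add _ _ _).1 hx with ⟨y, hy, rfl⟩ | ⟨k, hk, rfl⟩
          · rcases (Lopt_add _ _ _).1 hy with ⟨g, hg, rfl⟩ | ⟨h, hh, rfl⟩
            · exact ⟨_, (Lopt_add _ _ _).2 (Or.inl ⟨g, hg, rfl⟩), hL g hg H K⟩
            · exact ⟨_, (Lopt_add _ _ _).2 (Or.inr ⟨_, (Lopt_add _ _ _).2
                (Or.inl ⟨h, hh, rfl⟩), rfl⟩), hL' h hh K⟩
          · exact ⟨_, (Lopt_add _ _ _).2 (Or.inr ⟨_, (Lopt_add _ _ _).2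
                (Or.inr ⟨k, hk, rfl⟩), rfl⟩), hL'' k hk⟩
        · intro x hx
          rcases (Lopt_add _ _ _).1 hx with ⟨g, hg, rfl⟩ | ⟨y, hy, rfl⟩
          · exact ⟨_, (Lopt_add _ _ _).2 (Or.inl ⟨_, (Lopt_add _ _ _).2
                (Or.inl ⟨g, hg, rfl⟩), rfl⟩), hL g hg H K⟩
          · rcases (Lopt_add _ _ _).1 hy with ⟨h, hh, rfl⟩ | ⟨k, hk, rfl⟩
            · exact ⟨_, (Lopt_add _ _ _).2 (Or.inl ⟨_, (Lopt_add _ _ _).2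
                (Or.inr ⟨h, hh, rfl⟩), rfl⟩), hL' h hh K⟩
            · exact ⟨_, (Lopt_add _ _ _).2 (Or.inr ⟨k, hk, rfl⟩), hL'' k hk⟩
        · intro x hx
          rcases (Ropt_add _ _ _).1 hx with ⟨y, hy, rfl⟩ | ⟨k, hk, rfl⟩
          · rcases (Ropt_add _ _ _).1 hy with ⟨g, hg, rfl⟩ | ⟨h, hh, rfl⟩
            · exact ⟨_, (Ropt_add _ _ _).2 (Or.inl ⟨g, hg, rfl⟩), hR g hg H K⟩
            · exact ⟨_, (Ropt_add _ _ _).2 (Or.inr ⟨_, (Ropt_add _ _ _).2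
                (Or.inl ⟨h, hh, rfl⟩), rfl⟩), hR' h hh K⟩
          · exact ⟨_, (Ropt_add _ _ _).2 (Or.inr ⟨_, (Ropt_add _ _ _).2
                (Or.inr ⟨k, hk, rfl⟩), rfl⟩), hR'' k hk⟩
        · intro x hx
          rcases (Ropt_add _ _ _).1 hx with ⟨g, hg, rfl⟩ | ⟨y, hy, rfl⟩
          · exact ⟨_, (Ropt_add _ _ _).2 (Or.inl ⟨_, (Ropt_add _ _ _).2
                (Or.inl ⟨g, hg, rfl⟩), rfl⟩), hR g hg H K⟩
          · rcases (Ropt_add _ _ _).1 hy with ⟨h, hh, rfl⟩ | ⟨k, hk, rfl⟩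
            · exact ⟨_, (Ropt_add _ _ _).2 (Or.inl ⟨_, (Ropt_add _ _ _).2
                (Or.inr ⟨h, hh, rfl⟩), rfl⟩), hR' h hh K⟩
            · exact ⟨_, (Ropt_add _ _ _).2 (Or.inr ⟨k, hk, rfl⟩), hR'' k hk⟩

/-! Quotient by structural equivalence -/

def simSetoid : Setoid Aug := ⟨Sim, sim_refl, fun {a b} => sim_symm a b, fun {a b c} => sim_trans a b c⟩

def SQ : Type := Quotient simSetoid

def toQ (G : Aug) : SQ := Quotient.mk simSetoid G

lemma toQ_eq {G H : Aug} : toQ G = toQ H ↔ Sim G H :=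
  ⟨fun h => Quotient.exact h, fun h => Quotient.sound (s := simSetoid) h⟩

lemma sim_add_congr {G G' H H' : Aug} (h : Sim G G') (h' : Sim H H') :
    Sim (G + H) (G' + H') :=
  sim_trans _ _ _ (sim_add_right _ _ H h)
    (sim_trans _ _ _ (sim_comm _ _) (sim_trans _ _ _ (sim_add_right _ _ G' h') (sim_comm _ _)))

noncomputable instance : Add SQ :=
  ⟨Quotient.map₂ (· + ·) (fun _ _ h _ _ h' => sim_add_congr h h')⟩

instance : Zero SQ := ⟨toQ 0⟩

noncomputable instance : AddCommMonoid SQ where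
  add_assoc := by
    rintro ⟨a⟩ ⟨b⟩ ⟨c⟩; exact toQ_eq.2 (sim_assoc a b c)
  zero_add := by
    rintro ⟨a⟩; exact toQ_eq.2 (sim_zero_add a)
  add_zero := by
    rintro ⟨a⟩; exact toQ_eq.2 (sim_trans _ _ _ (sim_comm a 0) (sim_zero_add a))
  add_comm := by
    rintro ⟨a⟩ ⟨b⟩; exact toQ_eq.2 (sim_comm a b)
  nsmul := nsmulRec

lemma toQ_add (G H : Aug) : toQ (G + H) = toQ G + toQ H := rfl
lemma toQ_zero : toQ 0 = 0 := rfl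

lemma oL_congr {G H : Aug} (h : toQ G = toQ H) : oL G ↔ oL H :=
  sim_winsF _ _ (toQ_eq.1 h) true
lemma oR_congr {G H : Aug} (h : toQ G = toQ H) : oR G ↔ oR H :=
  not_congr (sim_winsF _ _ (toQ_eq.1 h) false)

/-! Conjugates -/

lemma conj_mk (m n L R tl tr) : conj (mk m n L R tl tr) =
    mk n m (fun i => conj (R i)) (fun i => conj (L i)) tr tl := rfl

lemma conj_conj (G : Aug) : conj (conj G) = G := by
  induction G with
  | mk m n L R tl tr ihL ihR => simp only [conj_mk, ihL, ihR]

lemma conj_zero : conj 0 = 0 := by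
  change conj (mk 0 0 _ _ false false) = mk 0 0 _ _ false false
  rw [conj_mk]
  congr 1 <;> exact funext fun i => i.elim0

lemma conj_star : conj star = star := by
  unfold star; rw [conj_mk]; simp only [conj_zero]

lemma conj_add (G : Aug) : ∀ H, conj (G + H) = conj G + conj H := by
  induction G with
  | mk m n L R tl tr ihL ihR =>
    intro H
    induction H with
    | mk m' n' L' R' tl' tr' ihL' ihR' =>
      rw [add_mk, conj_mk, conj_mk, conj_mk, add_mk]
      congr 1
      · funext i
        refine Fin.addCases (fun i => ?_) (fun i => ?_) i
        · simp [ihR, conj_mk]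
        · simp [ihR', conj_mk]
      · funext i
        refine Fin.addCases (fun i => ?_) (fun i => ?_) i
        · simp [ihL, conj_mk]
        · simp [ihL', conj_mk]

lemma winsF_conj (G : Aug) : ∀ b, winsF (conj G) b ↔ winsF G (!b) := by
  induction G with
  | mk m n L R tl tr ihL ihR =>
    rw [conj_mk]
    rintro (_ | _)
    · change (tl = true ∨ m = 0 ∨ ∃ i, ¬ winsF (conj (L i)) true) ↔
        (tl = true ∨ m = 0 ∨ ∃ i, ¬ winsF (L i) false)
      simp [ihL]
    · change (tr = true ∨ n = 0 ∨ ∃ i, ¬ winsF (conj (R i)) false) ↔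
        (tr = true ∨ n = 0 ∨ ∃ i, ¬ winsF (R i) true)
      simp [ihR]

lemma oL_conj (G : Aug) : oL (conj G) ↔ ¬ oR G := by
  simp [oL, oR, winsF_conj]
lemma oR_conj (G : Aug) : oR (conj G) ↔ ¬ oL G := by
  simp [oL, oR, winsF_conj]

/-! Working inside a universe -/

lemma tomb_of_game (G : Aug) (h : IsGame G) : G.tombL = false ∧ G.tombR = false := by
  cases G; exact ⟨h.1, h.2.1⟩

lemma memL {U : Set Aug} (hU : IsUniverse U) {G x : Aug} (hG : G ∈ U) (h : Lopt G x) : x ∈ U := by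
  obtain ⟨i, rfl⟩ := h; exact hU.moveL_mem G hG i

lemma memR {U : Set Aug} (hU : IsUniverse U) {G x : Aug} (hG : G ∈ U) (h : Ropt G x) : x ∈ U := by
  obtain ⟨i, rfl⟩ := h; exact hU.moveR_mem G hG i

lemma oL_iff {U : Set Aug} (hU : IsUniverse U) {G : Aug} (hG : G ∈ U) :
    oL G ↔ (∀ x, ¬ Lopt G x) ∨ ∃ x, Lopt G x ∧ oR x := by
  unfold oL oR
  rw [winsF_true, (tomb_of_game G (hU.games G hG)).1]
  simp

lemma oR_iff {U : Set Aug} (hU : IsUniverse U) {G : Aug} (hG : G ∈ U) :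
    oR G ↔ (∃ x, Ropt G x) ∧ ∀ x, Ropt G x → oL x := by
  unfold oL oR
  rw [winsF_false, (tomb_of_game G (hU.games G hG)).2]
  simp

lemma Lopt_star (x : Aug) : Lopt star x ↔ x = 0 :=
  ⟨fun ⟨_, h⟩ => h.symm, fun h => ⟨(0 : Fin 1), h.symm⟩⟩
lemma Ropt_star (x : Aug) : Ropt star x ↔ x = 0 :=
  ⟨fun ⟨_, h⟩ => h.symm, fun h => ⟨(0 : Fin 1), h.symm⟩⟩

lemma star_mem {U : Set Aug} (hU : IsUniverse U) : star ∈ U :=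
  hU.dicotic 1 1 _ _ one_pos one_pos (fun _ => hU.zero_mem) (fun _ => hU.zero_mem)

lemma exists_dicot {U : Set Aug} (hU : IsUniverse U) (S T : List Aug) (hS : S ≠ []) (hT : T ≠ [])
    (hSU : ∀ x ∈ S, x ∈ U) (hTU : ∀ x ∈ T, x ∈ U) :
    ∃ G ∈ U, (∀ x, Lopt G x ↔ x ∈ S) ∧ (∀ x, Ropt G x ↔ x ∈ T) := by
  refine ⟨mk S.length T.length S.get T.get false false, ?_, ?_, ?_⟩
  · exact hU.dicotic _ _ _ _ (List.length_pos_iff.2 hS) (List.length_pos_iff.2 hT)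
      (fun i => hSU _ (List.get_mem _ _)) (fun i => hTU _ (List.get_mem _ _))
  · intro x; exact List.mem_iff_get.symm
  · intro x; exact List.mem_iff_get.symm

lemma choose_list (G : Aug) (P : Aug → Aug → Prop) (h : ∀ x, Ropt G x → ∃ t, P x t) :
    ∃ S : List Aug, (∀ t ∈ S, ∃ x, Ropt G x ∧ P x t) ∧ ∀ x, Ropt G x → ∃ t ∈ S, P x t := by
  have h' : ∀ i, ∃ t, P (G.moveR i) t := fun i => h _ ⟨i, rfl⟩
  choose f hf using h'
  refine ⟨List.ofFn f, ?_, ?_⟩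
  · intro t ht
    obtain ⟨i, rfl⟩ := (List.mem_ofFn' f t).1 ht
    exact ⟨_, ⟨i, rfl⟩, hf i⟩
  · rintro x ⟨i, rfl⟩
    exact ⟨f i, (List.mem_ofFn' f _).2 ⟨i, rfl⟩, hf i⟩

lemma exists_good {U : Set Aug} (hU : IsUniverse U) (M : Aug) :
    M ∈ U → (∃ q ∈ U, oR (M + q)) ∧ (∃ Q ∈ U, oL (M + Q)) := by
  induction M using game_ind with
  | h M hL hR =>
    intro hM
    have h2 : ∃ Q ∈ U, oL (M + Q) := by
      by_cases he : ∃ x, Lopt M x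
      · obtain ⟨x, hx⟩ := he
        obtain ⟨q, hq, ho⟩ := (hL x hx (memL hU hM hx)).1
        refine ⟨q, hq, (oL_iff hU (hU.add_mem _ hM _ hq)).2 (Or.inr ⟨x + q, ?_, ho⟩)⟩
        exact (Lopt_add _ _ _).2 (Or.inl ⟨x, hx, rfl⟩)
      · refine ⟨0, hU.zero_mem, (oL_iff hU (hU.add_mem _ hM _ hU.zero_mem)).2 (Or.inl ?_)⟩
        intro x hx
        rcases (Lopt_add _ _ _).1 hx with ⟨g, hg, _⟩ | ⟨g, hg, _⟩
        · exact he ⟨g, hg⟩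
        · exact not_Lopt_zero _ hg
    refine ⟨?_, h2⟩
    obtain ⟨Q, hQ, hQo⟩ := h2
    obtain ⟨S, hS1, hS2⟩ := choose_list M (fun x q => q ∈ U ∧ oR (x + q))
      (fun x hx => (hR x hx (memR hU hM hx)).1)
    obtain ⟨q, hq, hqL, hqR⟩ := exists_dicot hU (0 :: S) [Q] (by simp) (by simp)
      (by
        intro x hx
        rcases List.mem_cons.1 hx with rfl | hx
        · exact hU.zero_mem
        · obtain ⟨_, _, h, _⟩ := hS1 x hx; exact h)
      (by simpa using hQ)
    refine ⟨q, hq, (oR_iff hU (hU.add_mem _ hM _ hq)).2 ⟨⟨M + Q, ?_⟩, ?_⟩⟩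
    · exact (Ropt_add _ _ _).2 (Or.inr ⟨Q, (hqR Q).2 (by simp), rfl⟩)
    · intro x hx
      rcases (Ropt_add _ _ _).1 hx with ⟨g, hg, rfl⟩ | ⟨g, hg, rfl⟩
      · obtain ⟨t, htS, ht, hto⟩ := hS2 g hg
        refine (oL_iff hU (hU.add_mem _ (memR hU hM hg) _ hq)).2 (Or.inr ⟨g + t, ?_, hto⟩)
        exact (Lopt_add _ _ _).2 (Or.inr ⟨t, (hqL t).2 (List.mem_cons_of_mem _ htS), rfl⟩)
      · have := (hqR g).1 hg
        simp at this
        rwa [this]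

def Le (U : Set Aug) (G H : Aug) : Prop :=
  ∀ X ∈ U, (oL (G + X) → oL (H + X)) ∧ (oR (G + X) → oR (H + X))

lemma Le.trans {U : Set Aug} {G H K : Aug} (h : Le U G H) (h' : Le U H K) : Le U G K :=
  fun X hX => ⟨fun a => (h' X hX).1 ((h X hX).1 a), fun a => (h' X hX).2 ((h X hX).2 a)⟩

lemma Le.of_eq {U : Set Aug} {G H : Aug} (h : toQ G = toQ H) : Le U G H := by
  intro X _
  have : toQ (G + X) = toQ (H + X) := by rw [toQ_add, toQ_add, h]
  exact ⟨(oL_congr this).1, (oR_congr this).1⟩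

lemma Le.add_right {U : Set Aug} (hU : IsUniverse U) {G H Z : Aug} (h : Le U G H) (hZ : Z ∈ U) :
    Le U (G + Z) (H + Z) := by
  intro X hX
  have e : ∀ A : Aug, toQ (A + Z + X) = toQ (A + (Z + X)) := fun A => by
    simp only [toQ_add]; abel
  rw [oL_congr (e G), oL_congr (e H), oR_congr (e G), oR_congr (e H)]
  exact h _ (hU.add_mem _ hZ _ hX)

lemma Le.conj {U : Set Aug} (hU : IsUniverse U) {G H : Aug} (h : Le U G H) :
    Le U (conj H) (conj G) := by
  intro X hX
  have e : ∀ A : Aug, Aug.conj A + X = Aug.conj (A + Aug.conj X) := fun A => by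
    rw [conj_add, conj_conj]
  rw [e, e, oL_conj, oL_conj, oR_conj, oR_conj]
  have := h _ (hU.conj_mem X hX)
  tauto

lemma oL_zero_add (X : Aug) : oL (0 + X) ↔ oL X := oL_congr (by simp [toQ_add, toQ_zero])
lemma oR_zero_add (X : Aug) : oR (0 + X) ↔ oR X := oR_congr (by simp [toQ_add, toQ_zero])

lemma exists_sep {U : Set Aug} (hU : IsUniverse U) {M : Aug} (hM : M ∈ U) (h : ¬ Le U M 0) :
    ∃ t, t ∈ U ∧ oR (M + t) ∧ ¬ oR t := by
  unfold Le at h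
  push Not at h
  obtain ⟨X, hX, h⟩ := h
  rw [oL_zero_add, oR_zero_add] at h
  by_cases h1 : oL (M + X) → oL X
  · obtain ⟨a, b⟩ := h h1
    exact ⟨X, hX, a, b⟩
  · push Not at h1
    obtain ⟨a, b⟩ := h1
    obtain ⟨S, hS1, hS2⟩ := choose_list M (fun x q => q ∈ U ∧ oR (x + q))
      (fun x hx => (exists_good hU x (memR hU hM hx)).1)
    obtain ⟨q, hq, hqL, hqR⟩ := exists_dicot hU (0 :: S) [X] (by simp) (by simp)
      (by
        intro x hx
        rcases List.mem_cons.1 hx with rfl | hx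
        · exact hU.zero_mem
        · obtain ⟨_, _, h, _⟩ := hS1 x hx; exact h)
      (by simpa using hX)
    refine ⟨q, hq, (oR_iff hU (hU.add_mem _ hM _ hq)).2 ⟨⟨M + X, ?_⟩, ?_⟩, ?_⟩
    · exact (Ropt_add _ _ _).2 (Or.inr ⟨X, (hqR X).2 (by simp), rfl⟩)
    · intro x hx
      rcases (Ropt_add _ _ _).1 hx with ⟨g, hg, rfl⟩ | ⟨g, hg, rfl⟩
      · obtain ⟨t, htS, ht, hto⟩ := hS2 g hg
        refine (oL_iff hU (hU.add_mem _ (memR hU hM hg) _ hq)).2 (Or.inr ⟨g + t, ?_, hto⟩)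
        exact (Lopt_add _ _ _).2 (Or.inr ⟨t, (hqL t).2 (List.mem_cons_of_mem _ htS), rfl⟩)
      · have := (hqR g).1 hg
        simp at this
        rwa [this]
    · intro hc
      exact b (((oR_iff hU hq).1 hc).2 X ((hqR X).2 (by simp)))

lemma maintenance {U : Set Aug} (hU : IsUniverse U) {J l : Aug} (hJ : J ∈ U) (h : Le U J 0)
    (hl : Lopt J l) : ∃ r, Ropt l r ∧ Le U r 0 := by
  by_contra hc
  push Not at hc
  have hlU := memL hU hJ hl
  obtain ⟨S, hS1, hS2⟩ := choose_list l (fun x t => t ∈ U ∧ oR (x + t) ∧ ¬ oR t)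
      (fun x hx => exists_sep hU (memR hU hlU hx) (hc x hx))
  obtain ⟨Q, hQ, hQo⟩ := (exists_good hU l hlU).2
  obtain ⟨T, hT, hTL, hTR⟩ := exists_dicot hU (0 :: S) [Q] (by simp) (by simp)
      (by
        intro x hx
        rcases List.mem_cons.1 hx with rfl | hx
        · exact hU.zero_mem
        · obtain ⟨_, _, h, _⟩ := hS1 x hx; exact h)
      (by simpa using hQ)
  have h1 : oL (J + T) := by
    refine (oL_iff hU (hU.add_mem _ hJ _ hT)).2
      (Or.inr ⟨l + T, (Lopt_add _ _ _).2 (Or.inl ⟨l, hl, rfl⟩), ?_⟩)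
    refine (oR_iff hU (hU.add_mem _ hlU _ hT)).2 ⟨⟨l + Q, ?_⟩, ?_⟩
    · exact (Ropt_add _ _ _).2 (Or.inr ⟨Q, (hTR Q).2 (by simp), rfl⟩)
    · intro x hx
      rcases (Ropt_add _ _ _).1 hx with ⟨g, hg, rfl⟩ | ⟨g, hg, rfl⟩
      · obtain ⟨t, htS, ht, hto, _⟩ := hS2 g hg
        refine (oL_iff hU (hU.add_mem _ (memR hU hlU hg) _ hT)).2 (Or.inr ⟨g + t, ?_, hto⟩)
        exact (Lopt_add _ _ _).2 (Or.inr ⟨t, (hTL t).2 (List.mem_cons_of_mem _ htS), rfl⟩)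
      · have := (hTR g).1 hg
        simp at this
        rwa [this]
  have h2 := (oL_zero_add T).1 ((h T hT).1 h1)
  rcases (oL_iff hU hT).1 h2 with h3 | ⟨x, hx, hxo⟩
  · exact h3 0 ((hTL 0).2 (by simp))
  · rcases List.mem_cons.1 ((hTL x).1 hx) with rfl | hx
    · obtain ⟨⟨y, hy⟩, _⟩ := (oR_iff hU hU.zero_mem).1 hxo
      exact not_Ropt_zero _ hy
    · obtain ⟨_, _, _, _, h⟩ := hS1 x hx
      exact h hxo

/-! Starkillers -/

lemma starkiller_iff (G : Aug) : Starkiller G ↔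
    ∃ r, Ropt G r ∧ ¬ oR r ∧ ∀ l, Lopt r l → ¬ oL l ∨ Starkiller l := by
  rw [Starkiller]
  simp only [Ropt, Lopt, oR, oL, not_not]
  constructor
  · rintro ⟨j, h1, h2⟩
    refine ⟨_, ⟨j, rfl⟩, h1, ?_⟩
    rintro l ⟨i, rfl⟩; exact h2 i
  · rintro ⟨_, ⟨j, rfl⟩, h1, h2⟩
    exact ⟨j, h1, fun i => h2 _ ⟨i, rfl⟩⟩

lemma birthday_Lopt {G x : Aug} (h : Lopt G x) : birthday x < birthday G := by
  obtain ⟨i, rfl⟩ := h; exact birthday_moveL_lt G i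
lemma birthday_Ropt {G x : Aug} (h : Ropt G x) : birthday x < birthday G := by
  obtain ⟨i, rfl⟩ := h; exact birthday_moveR_lt G i

lemma star_add_Lopt (G : Aug) : Lopt (star + G) (0 + G) :=
  (Lopt_add _ _ _).2 (Or.inl ⟨0, (Lopt_star _).2 rfl, rfl⟩)
lemma star_add_Ropt (G : Aug) : Ropt (star + G) (0 + G) :=
  (Ropt_add _ _ _).2 (Or.inl ⟨0, (Ropt_star _).2 rfl, rfl⟩)

lemma starkiller_oR {U : Set Aug} (hU : IsUniverse U) (n : ℕ) : ∀ X : Aug, birthday X < n → X ∈ U →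
    Starkiller X → ¬ oR (star + X) := by
  induction n with
  | zero => intro X h; omega
  | succ n ih =>
    intro X hn hX hs hc
    obtain ⟨r, hr, hro, hrl⟩ := (starkiller_iff X).1 hs
    have hrU := memR hU hX hr
    have hsU := star_mem hU
    have h1 := ((oR_iff hU (hU.add_mem _ hsU _ hX)).1 hc).2 (star + r)
      ((Ropt_add _ _ _).2 (Or.inr ⟨r, hr, rfl⟩))
    rcases (oL_iff hU (hU.add_mem _ hsU _ hrU)).1 h1 with h2 | ⟨x, hx, hxo⟩
    · exact h2 _ (star_add_Lopt r)
    · rcases (Lopt_add _ _ _).1 hx with ⟨g, hg, rfl⟩ | ⟨g, hg, rfl⟩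
      · rw [(Lopt_star g).1 hg, oR_zero_add] at hxo
        exact hro hxo
      · rcases hrl g hg with h3 | h3
        · have := ((oR_iff hU (hU.add_mem _ hsU _ (memL hU hrU hg))).1 hxo).2 _ (star_add_Ropt g)
          exact h3 ((oL_zero_add g).1 this)
        · have b1 := birthday_Ropt hr
          have b2 := birthday_Lopt hg
          exact ih g (by omega) (memL hU hrU hg) h3 hxo

lemma not_starkiller_oR {U : Set Aug} (hU : IsUniverse U) (n : ℕ) :
    ∀ X : Aug, birthday X < n → X ∈ U → oL X → ¬ Starkiller X → oR (star + X) := by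
  induction n with
  | zero => intro X h; omega
  | succ n ih =>
    intro X hn hX ho hs
    have hsU := star_mem hU
    rw [oR_iff hU (hU.add_mem _ hsU _ hX)]
    refine ⟨⟨_, star_add_Ropt X⟩, ?_⟩
    intro x hx
    rcases (Ropt_add _ _ _).1 hx with ⟨g, hg, rfl⟩ | ⟨r, hr, rfl⟩
    · rwa [(Ropt_star g).1 hg, oL_zero_add]
    · have hrU := memR hU hX hr
      rw [oL_iff hU (hU.add_mem _ hsU _ hrU)]
      right
      by_cases h1 : oR r
      · exact ⟨_, star_add_Lopt r, (oR_zero_add r).2 h1⟩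
      · rw [starkiller_iff] at hs
        push Not at hs
        obtain ⟨l, hl, hlo, hls⟩ := hs r hr h1
        have b1 := birthday_Ropt hr
        have b2 := birthday_Lopt hl
        exact ⟨star + l, (Lopt_add _ _ _).2 (Or.inr ⟨l, hl, rfl⟩),
          ih l (by omega) (memL hU hrU hl) hlo hls⟩

/-! The easy direction -/

lemma ss_Lopt (X : Aug) : Lopt (star + star + X) (0 + star + X) :=
  (Lopt_add _ _ _).2 (Or.inl ⟨_, star_add_Lopt star, rfl⟩)

lemma zero_le_ss {U : Set Aug} (hU : IsUniverse U)
    (h : ∀ X ∈ U, LeftEnd X → ¬ Starkiller X) : Le U 0 (star + star) := by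
  have hsU := star_mem hU
  have hssU := hU.add_mem _ hsU _ hsU
  have e : ∀ X : Aug, toQ (0 + star + X) = toQ (star + X) := fun X => by
    simp [toQ_add, toQ_zero]
  have e' : ∀ X : Aug, toQ (star + 0 + X) = toQ (star + X) := fun X => by
    simp [toQ_add, toQ_zero]
  intro X
  induction X using game_ind with
  | h X hL hR =>
    intro hX
    have hsum := hU.add_mem _ hssU _ hX
    rw [oL_zero_add, oR_zero_add]
    constructor
    · intro ho
      rw [oL_iff hU hsum]
      right
      by_cases he : LeftEnd X
      · exact ⟨_, ss_Lopt X, (oR_congr (e X)).2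
          (not_starkiller_oR hU _ X (Nat.lt_succ_self _) hX ho (h X hX he))⟩
      · rw [leftEnd_iff] at he
        rcases (oL_iff hU hX).1 ho with h1 | ⟨x, hx, hxo⟩
        · exact (he h1).elim
        · exact ⟨_, (Lopt_add _ _ _).2 (Or.inr ⟨x, hx, rfl⟩),
            (hL x hx (memL hU hX hx)).2 ((oR_zero_add x).2 hxo)⟩
    · intro ho
      have ho' := (oR_iff hU hX).1 ho
      rw [oR_iff hU hsum]
      obtain ⟨⟨y, hy⟩, ho2⟩ := ho'
      refine ⟨⟨_, (Ropt_add _ _ _).2 (Or.inr ⟨y, hy, rfl⟩)⟩, ?_⟩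
      intro x hx
      have key : oL (star + X) := by
        rw [oL_iff hU (hU.add_mem _ hsU _ hX)]
        exact Or.inr ⟨_, star_add_Lopt X, (oR_zero_add X).2 ho⟩
      rcases (Ropt_add _ _ _).1 hx with ⟨g, hg, rfl⟩ | ⟨r, hr, rfl⟩
      · rcases (Ropt_add _ _ _).1 hg with ⟨g, hg', rfl⟩ | ⟨g, hg', rfl⟩
        · rw [(Ropt_star g).1 hg']; exact (oL_congr (e X)).2 key
        · rw [(Ropt_star g).1 hg']; exact (oL_congr (e' X)).2 key
      · exact (hR r hr (memR hU hX hr)).1 ((oL_zero_add r).2 (ho2 r hr))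

lemma easy {U : Set Aug} (hU : IsUniverse U)
    (h : ∀ X ∈ U, LeftEnd X → ¬ Starkiller X) : Invertible U star := by
  have h1 := zero_le_ss hU h
  have h2 := h1.conj hU
  rw [conj_add, conj_zero, conj_star] at h2
  refine ⟨star, star_mem hU, fun X hX => ⟨⟨(h2 X hX).1, (h1 X hX).1⟩, ⟨(h2 X hX).2, (h1 X hX).2⟩⟩⟩

/-! The hard direction -/

lemma cancel {U : Set Aug} (hU : IsUniverse U) {G H : Aug} (hG : G ∈ U) (hH : H ∈ U)
    (h0 : Le U 0 (star + H)) (h1 : Le U (star + G) 0) : Le U G H := by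
  have a := h0.add_right hU hG
  have b := h1.add_right hU hH
  have e1 : toQ G = toQ (0 + G) := by simp [toQ_add, toQ_zero]
  have e2 : toQ (star + H + G) = toQ (star + G + H) := by simp only [toQ_add]; abel
  have e3 : toQ (0 + H) = toQ H := by simp [toQ_add, toQ_zero]
  exact (((Le.of_eq e1).trans a).trans (Le.of_eq e2)).trans (b.trans (Le.of_eq e3))

lemma exists_Ropt_le {U : Set Aug} (hU : IsUniverse U) {G : Aug} (hG : G ∈ U)
    (h : Le U (star + G) 0) : ∃ r, Ropt G r ∧ Le U r 0 := by
  obtain ⟨r, hr, hle⟩ := maintenance hU (hU.add_mem _ (star_mem hU) _ hG) h (star_add_Lopt G)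
  rcases (Ropt_add _ _ _).1 hr with ⟨g, hg, rfl⟩ | ⟨g, hg, rfl⟩
  · exact (not_Ropt_zero _ hg).elim
  · exact ⟨g, hg, (Le.of_eq (by simp [toQ_add, toQ_zero])).trans hle⟩

lemma Lopt_cases {U : Set Aug} (hU : IsUniverse U) {G l : Aug} (hG : G ∈ U)
    (h : Le U (star + G) 0) (hl : Lopt G l) :
    Le U l 0 ∨ ∃ r, Ropt l r ∧ Le U (star + r) 0 := by
  obtain ⟨r, hr, hle⟩ := maintenance hU (hU.add_mem _ (star_mem hU) _ hG) h
    ((Lopt_add _ _ _).2 (Or.inr ⟨l, hl, rfl⟩))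
  rcases (Ropt_add _ _ _).1 hr with ⟨g, hg, rfl⟩ | ⟨g, hg, rfl⟩
  · left
    rw [(Ropt_star g).1 hg] at hle
    exact (Le.of_eq (by simp [toQ_add, toQ_zero])).trans hle
  · exact Or.inr ⟨g, hg, hle⟩

lemma not_oR_zero : ¬ oR 0 := by
  unfold oR
  rw [not_not, winsF_false]
  exact Or.inr (Or.inl not_Ropt_zero)

lemma caseA {U : Set Aug} (hU : IsUniverse U) {H K : Aug} (hH : H ∈ U) (hK : K ∈ U)
    (h0 : Le U 0 (star + H)) (h1 : Le U (star + H) 0) (hKE : LeftEnd K)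
    (hK1 : Le U (star + K) 0) : False := by
  have hsU := star_mem hU
  rw [leftEnd_iff] at hKE
  have hKH := cancel hU hK hH h0 hK1
  have hc0 : Le U 0 (star + conj H) := by
    have := h1.conj hU
    rwa [conj_add, conj_star, conj_zero] at this
  have hGY : ∀ G ∈ U, Le U (star + G) 0 → Le U G (conj K) := fun G hG h =>
    (cancel hU hG (hU.conj_mem _ hH) hc0 h).trans (hKH.conj hU)
  have hYU := hU.conj_mem _ hK
  have hsum : ∀ G ∈ U, Le U (star + G) 0 → ¬ oR (G + K) := by
    intro G hG h hc
    have a := (hGY G hG h).add_right hU hK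
    have b := (hGY K hK hK1).add_right hU hYU
    have e : toQ (conj K + K) = toQ (K + conj K) := by simp only [toQ_add]; abel
    have c := ((a.trans (Le.of_eq e)).trans b 0 hU.zero_mem).2
      ((oR_congr (by simp [toQ_add, toQ_zero])).2 hc)
    rw [← conj_zero, ← conj_add, ← conj_add, oR_conj] at c
    apply c
    rw [oL_iff hU (hU.add_mem _ (hU.add_mem _ hK _ hK) _ hU.zero_mem)]
    left
    intro x hx
    simp only [Lopt_add, hKE, not_Lopt_zero] at hx
    simp at hx
  have claim : ∀ n, ∀ G, birthday G < n → G ∈ U → Le U (star + G) 0 → ¬ oL (star + G + K) := by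
    intro n
    induction n with
    | zero => intro G h; omega
    | succ n ih =>
      intro G hn hG hle hc
      have hsG := hU.add_mem _ hsU _ hG
      rcases (oL_iff hU (hU.add_mem _ hsG _ hK)).1 hc with h2 | ⟨x, hx, hxo⟩
      · exact h2 _ ((Lopt_add _ _ _).2 (Or.inl ⟨_, star_add_Lopt G, rfl⟩))
      · rcases (Lopt_add _ _ _).1 hx with ⟨y, hy, rfl⟩ | ⟨y, hy, _⟩
        · rcases (Lopt_add _ _ _).1 hy with ⟨g, hg, rfl⟩ | ⟨l, hl, rfl⟩
          · rw [(Lopt_star g).1 hg] at hxo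
            exact hsum G hG hle ((oR_congr (by simp [toQ_add, toQ_zero])).1 hxo)
          · have hlU := memL hU hG hl
            rcases Lopt_cases hU hG hle hl with h3 | ⟨r, hr, hrle⟩
            · have a := (h3 _ (hU.add_mem _ hsU _ hK)).2
                ((oR_congr (by simp only [toQ_add]; abel)).1 hxo)
              rw [oR_zero_add] at a
              have b := (hK1 0 hU.zero_mem).2 ((oR_congr (by simp [toQ_add, toQ_zero])).1 a)
              rw [oR_zero_add] at b
              exact not_oR_zero b
            · have a := ((oR_iff hU (hU.add_mem _ (hU.add_mem _ hsU _ hlU) _ hK)).1 hxo).2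
                (star + r + K) ((Ropt_add _ _ _).2 (Or.inl ⟨_, (Ropt_add _ _ _).2
                  (Or.inr ⟨r, hr, rfl⟩), rfl⟩))
              have b1 := birthday_Ropt hr
              have b2 := birthday_Lopt hl
              exact ih r (by omega) (memR hU hlU hr) hrle a
        · exact hKE y hy
  refine claim _ H (Nat.lt_succ_self _) hH h1 ((h0 K hK).1 ((oL_zero_add K).2 ?_))
  rw [oL_iff hU hK]
  exact Or.inl hKE

lemma caseB {U : Set Aug} (hU : IsUniverse U)
    (hno : ∀ K ∈ U, Le U (star + K) 0 → ¬ LeftEnd K) (n : ℕ) :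
    ∀ G, birthday G < n → G ∈ U → Le U (star + G) 0 → Le U G star := by
  have hsU := star_mem hU
  induction n with
  | zero => intro G h; omega
  | succ n ih =>
    intro G hn hG hle X
    induction X using game_ind with
    | h X hL hR =>
      intro hX
      constructor
      · intro ho
        rw [oL_iff hU (hU.add_mem _ hsU _ hX)]
        rcases (oL_iff hU (hU.add_mem _ hG _ hX)).1 ho with h1 | ⟨x, hx, hxo⟩
        · exfalso
          apply hno G hG hle
          rw [leftEnd_iff]
          intro x hx
          exact h1 _ ((Lopt_add _ _ _).2 (Or.inl ⟨x, hx, rfl⟩))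
        · rcases (Lopt_add _ _ _).1 hx with ⟨l, hl, rfl⟩ | ⟨y, hy, rfl⟩
          · have hlU := memL hU hG hl
            rcases Lopt_cases hU hG hle hl with h3 | ⟨r, hr, hrle⟩
            · exact Or.inr ⟨_, star_add_Lopt X, (h3 X hX).2 hxo⟩
            · have a := ((oR_iff hU (hU.add_mem _ hlU _ hX)).1 hxo).2 (r + X)
                ((Ropt_add _ _ _).2 (Or.inl ⟨r, hr, rfl⟩))
              have b1 := birthday_Ropt hr
              have b2 := birthday_Lopt hl
              have b := (ih r (by omega) (memR hU hlU hr) hrle X hX).1 a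
              exact (oL_iff hU (hU.add_mem _ hsU _ hX)).1 b
          · exact Or.inr ⟨_, (Lopt_add _ _ _).2 (Or.inr ⟨y, hy, rfl⟩),
              (hL y hy (memL hU hX hy)).2 hxo⟩
      · intro ho
        rw [oR_iff hU (hU.add_mem _ hsU _ hX)]
        refine ⟨⟨_, star_add_Ropt X⟩, ?_⟩
        have ho' := ((oR_iff hU (hU.add_mem _ hG _ hX)).1 ho).2
        intro x hx
        rcases (Ropt_add _ _ _).1 hx with ⟨g, hg, rfl⟩ | ⟨y, hy, rfl⟩
        · rw [(Ropt_star g).1 hg]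
          obtain ⟨r, hr, hrle⟩ := exists_Ropt_le hU hG hle
          exact (hrle X hX).1 (ho' _ ((Ropt_add _ _ _).2 (Or.inl ⟨r, hr, rfl⟩)))
        · exact (hR y hy (memR hU hX hy)).1 (ho' _ ((Ropt_add _ _ _).2 (Or.inr ⟨y, hy, rfl⟩)))

lemma hard {U : Set Aug} (hU : IsUniverse U) (h : Invertible U star) :
    ∀ X ∈ U, LeftEnd X → ¬ Starkiller X := by
  intro X hX hXE hXs
  have hsU := star_mem hU
  have hssU := hU.add_mem _ hsU _ hsU
  obtain ⟨H, hH, heq⟩ := h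
  have h0 : Le U 0 (star + H) := fun X hX => ⟨(heq X hX).1.2, (heq X hX).2.2⟩
  have h1 : Le U (star + H) 0 := fun X hX => ⟨(heq X hX).1.1, (heq X hX).2.1⟩
  by_cases hc : ∃ K ∈ U, Le U (star + K) 0 ∧ LeftEnd K
  · obtain ⟨K, hK, hK1, hKE⟩ := hc
    exact caseA hU hH hK h0 h1 hKE hK1
  · push Not at hc
    have a := (caseB hU hc _ H (Nat.lt_succ_self _) hH h1).add_right hU hsU
    have e : toQ (star + H) = toQ (H + star) := by simp only [toQ_add]; abel
    have b := (h0.trans (Le.of_eq e)).trans a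
    rw [leftEnd_iff] at hXE
    have c := (b X hX).1 ((oL_zero_add X).2 ((oL_iff hU hX).2 (Or.inl hXE)))
    have k := starkiller_oR hU _ X (Nat.lt_succ_self _) hX hXs
    rcases (oL_iff hU (hU.add_mem _ hssU _ hX)).1 c with h2 | ⟨x, hx, hxo⟩
    · exact h2 _ (ss_Lopt X)
    · rcases (Lopt_add _ _ _).1 hx with ⟨y, hy, rfl⟩ | ⟨y, hy, _⟩
      · rcases (Lopt_add _ _ _).1 hy with ⟨g, hg, rfl⟩ | ⟨g, hg, rfl⟩
        · rw [(Lopt_star g).1 hg] at hxo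
          exact k ((oR_congr (by simp [toQ_add, toQ_zero])).1 hxo)
        · rw [(Lopt_star g).1 hg] at hxo
          exact k ((oR_congr (by simp [toQ_add, toQ_zero])).1 hxo)
      · exact hXE y hy

lemma star_main (U : Set Aug) (hU : IsUniverse U) :
    Invertible U star ↔ ∀ X ∈ U, LeftEnd X → ¬ Starkiller X :=
  ⟨hard hU, easy hU⟩

end Aug

/-- `*` is `U`-invertible iff `U` contains no Left end that is a
starkiller. -/
theorem stmt16 (U : Set Aug) (hU : Aug.IsUniverse U) :
    Aug.Invertible U Aug.star ↔
      ∀ X ∈ U, Aug.LeftEnd X → ¬ Aug.Starkiller X := by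
  exact Aug.star_main U hU
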